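/- arXiv:1604.01838 — 5 statements merged into one kernel-verified Lean document; each statement's English description precedes it below -/
import Mathlib

section
/- Let N ≥ 1, let R be a finite index set, let m : R → ℤ^N and a : R → ℚ, and let D = {x ∈ ℝ^N : ∀ r ∈ R, ∑_{i=1}^N m(r)_i · x_i ≤ a(r)} be nonempty. Let I ⊆ {1, …, N} be nonempty and let J = {1, …, N} \ I, with π : ℝ^N → ℝ^J the coordinate projection. Then the following are equivalent: (i) there exists a sequence (x_k) of points of D such that x_{k,i} → −∞ for every i ∈ I and x_{k,j} converges for every j ∈ J; (ii) there exists v ∈ ℝ^N with v_j = 0 for every j ∈ J, v_i < 0 for every i ∈ I, and ∑_i m(r)_i · v_i ≤ 0 for every r ∈ R. Moreover, if these conditions hold, then the set of all limits lim_k π(x_k), over all sequences (x_k) as in (i), equals the image π(D), and the dimension of the affine span of π(D) is at most (dimension of the affine span of D) − 1. -/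
open Filter Topology

/-- A finite system of linear inequalities in one real unknown is solvable iff every
consequence obtained by eliminating the unknown holds. -/
theorem exists_forall_mul_le_iff {ι : Type*} [Finite ι] (c e : ι → ℝ) :
    (∃ t, ∀ i, c i * t ≤ e i) ↔
      (∀ i, c i = 0 → 0 ≤ e i) ∧
        ∀ i j, 0 < c i → c j < 0 → 0 ≤ c i * e j - c j * e i := by
  constructor
  · rintro ⟨t, ht⟩
    refine ⟨fun i hi => by simpa [hi] using ht i, fun i j hi hj => ?_⟩
    nlinarith [mul_le_mul_of_nonneg_left (ht j) hi.le,
      mul_le_mul_of_nonpos_left (ht i) hj.le]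
  · rintro ⟨hzero, hpair⟩
    suffices h : ∃ t, (∀ i, 0 < c i → t ≤ e i / c i) ∧ ∀ j, c j < 0 → e j / c j ≤ t by
      obtain ⟨t, hpos, hneg⟩ := h
      refine ⟨t, fun i => ?_⟩
      rcases lt_trichotomy (c i) 0 with hi | hi | hi
      · simpa [mul_comm] using (div_le_iff_of_neg hi).1 (hneg i hi)
      · simpa [hi] using hzero i hi
      · simpa [mul_comm] using (le_div_iff₀ hi).1 (hpos i hi)
    by_cases hneg : {j | c j < 0}.Nonempty
    · obtain ⟨j, hj, hmax⟩ :=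
        Set.exists_max_image {j | c j < 0} (fun j => e j / c j) (Set.toFinite _) hneg
      refine ⟨e j / c j, fun i hi => ?_, hmax⟩
      rw [div_le_iff_of_neg hj, div_mul_eq_mul_div, div_le_iff₀ hi]
      linarith [hpair i j hi hj]
    · obtain ⟨t, ht⟩ := (Set.finite_range fun i => e i / c i).bddBelow
      exact ⟨t, fun i _ => ht ⟨i, rfl⟩, fun j hj => absurd ⟨j, hj⟩ hneg⟩

/-- The set of right-hand sides for which a finite system of linear inequalities is solvable is
closed. The proof is Fourier–Motzkin elimination. -/
theorem isClosed_setOf_exists_sum_mul_le (n : ℕ) {ι : Type*} [Finite ι] (A : ι → Fin n → ℝ) :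
    IsClosed {b : ι → ℝ | ∃ y : Fin n → ℝ, ∀ i, ∑ j, A i j * y j ≤ b i} := by
  induction n generalizing ι with
  | zero =>
    simp only [Finset.univ_eq_empty, Finset.sum_empty, exists_const, Set.ofPred_forall]
    exact isClosed_iInter fun i => isClosed_le continuous_const (continuous_apply i)
  | succ n ih =>
    let c : ι → ℝ := fun i => A i 0
    let κ := {i // c i = 0} ⊕ {p : ι × ι // 0 < c p.1 ∧ c p.2 < 0}
    let eliminate (b : ι → ℝ) : κ → ℝ :=
      Sum.elim (fun i => b i) fun p => c p.1.1 * b p.1.2 - c p.1.2 * b p.1.1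
    have hcont : Continuous eliminate := by
      refine continuous_pi fun k => ?_
      rcases k with i | p <;> simp only [eliminate, Sum.elim_inl, Sum.elim_inr] <;> fun_prop
    convert (ih fun k j => eliminate (fun i => A i j.succ) k).preimage hcont using 1
    ext b
    have hsplit : (∃ y : Fin (n + 1) → ℝ, ∀ i, ∑ j, A i j * y j ≤ b i) ↔
        ∃ y : Fin n → ℝ, ∃ t, ∀ i, c i * t ≤ b i - ∑ j, A i j.succ * y j := by
      simp only [Fin.exists_fin_succ_pi, Fin.sum_univ_succ, Fin.cons_zero, Fin.cons_succ,
        le_sub_iff_add_le, c]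
      exact exists_comm
    simp only [Set.mem_ofPred_eq, Set.mem_preimage, hsplit]
    refine exists_congr fun y => ?_
    rw [exists_forall_mul_le_iff]
    simp only [κ, eliminate, Sum.forall, Sum.elim_inl, Sum.elim_inr, Subtype.forall, Prod.forall,
      sub_nonneg, and_imp]
    refine and_congr Iff.rfl (forall₄_congr fun i j _ _ => ?_)
    simp only [sub_mul, Finset.sum_sub_distrib, mul_assoc, ← Finset.mul_sum, mul_sub]
    constructor <;> intro h <;> linarith

/-- Solvability of a finite system of linear inequalities, with the coordinates outside `I`
prescribed and those in `I` bounded above, is a closed condition on the data. -/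
theorem isClosed_setOf_exists_sum_mul_le_and_eq {n : ℕ} {ι : Type*} [Finite ι]
    (A : ι → Fin n → ℝ) (I : Set (Fin n)) :
    IsClosed {p : (ι → ℝ) × (Fin n → ℝ) | ∃ y : Fin n → ℝ, (∀ i, ∑ j, A i j * y j ≤ p.1 i) ∧
      (∀ j ∈ I, y j ≤ p.2 j) ∧ ∀ j ∉ I, y j = p.2 j} := by
  let B : ι ⊕ Fin n ⊕ {j // j ∉ I} → Fin n → ℝ :=
    Sum.elim A (Sum.elim (fun j => Pi.single j 1) fun j => Pi.single j.1 (-1))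
  let rhs (p : (ι → ℝ) × (Fin n → ℝ)) : ι ⊕ Fin n ⊕ {j // j ∉ I} → ℝ :=
    Sum.elim p.1 (Sum.elim p.2 fun j => -p.2 j)
  have hcont : Continuous rhs := by
    refine continuous_pi fun k => ?_
    rcases k with i | j | j <;> simp only [rhs, Sum.elim_inl, Sum.elim_inr] <;> fun_prop
  convert (isClosed_setOf_exists_sum_mul_le n B).preimage hcont using 1
  ext p
  refine exists_congr fun y => ?_
  simp only [B, rhs, Sum.forall, Sum.elim_inl, Sum.elim_inr, Subtype.forall, Pi.single_apply,
    ite_mul, one_mul, zero_mul, Finset.sum_ite_eq', Finset.mem_univ, if_true,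
    neg_mul, neg_le_neg_iff]
  refine and_congr_right fun _ => ⟨fun h => ⟨fun j => ?_, fun j hj => (h.2 j hj).ge⟩,
    fun h => ⟨fun j _ => h.1 j, fun j hj => (h.1 j).antisymm (h.2 j hj)⟩⟩
  by_cases hj : j ∈ I
  exacts [h.1 j hj, (h.2 j hj).le]

/-- If points of a polyhedron have coordinates in `I` tending to `-∞` and the others convergent,
then the polyhedron has a recession vector supported on `I` and negative there. -/
theorem exists_recession_of_tendsto {n : ℕ} {ι : Type*} [Finite ι] (A : ι → Fin n → ℝ)
    (b : ι → ℝ) (I : Set (Fin n)) (x : ℕ → Fin n → ℝ) (hx : ∀ k i, ∑ j, A i j * x k j ≤ b i)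
    (hbot : ∀ j ∈ I, Tendsto (fun k => x k j) atTop atBot) (L : Fin n → ℝ)
    (hL : ∀ j ∉ I, Tendsto (fun k => x k j) atTop (𝓝 (L j))) :
    ∃ v : Fin n → ℝ, (∀ j ∉ I, v j = 0) ∧ (∀ j ∈ I, v j < 0) ∧ ∀ i, ∑ j, A i j * v j ≤ 0 := by
  classical
  have hex (k : ℕ) : ∃ l ≥ k, ∀ j ∈ I, x l j ≤ -((k : ℝ) + 1) := by
    have h : ∀ᶠ l in atTop, ∀ j, j ∈ I → x l j ≤ -((k : ℝ) + 1) :=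
      eventually_all.2 fun j => by
        by_cases hj : j ∈ I
        · filter_upwards [(hbot j hj).eventually_le_atBot _] with l hl _ using hl
        · exact Eventually.of_forall fun _ h => absurd h hj
    exact ((eventually_ge_atTop k).and h).exists
  choose φ hφ hφI using hex
  have hφtop : Tendsto φ atTop atTop := tendsto_atTop_mono hφ tendsto_id
  let s : ℕ → ℝ := fun k => 1 / ((k : ℝ) + 1)
  have hs : Tendsto s atTop (𝓝 0) := tendsto_one_div_add_atTop_nhds_zero_nat
  have hspos (k : ℕ) : 0 < s k := Nat.one_div_pos_of_nat
  let u : ℕ → Fin n → ℝ := fun k j => if j ∈ I then -1 else s k * x (φ k) j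
  have hu : Tendsto u atTop (𝓝 fun j => if j ∈ I then -1 else 0) := by
    refine tendsto_pi_nhds.2 fun j => ?_
    by_cases hj : j ∈ I
    · simp [u, hj]
    · simpa [u, hj] using hs.mul ((hL j hj).comp hφtop)
  have hb : Tendsto (fun k i => s k * b i) atTop (𝓝 fun _ => 0) :=
    tendsto_pi_nhds.2 fun i => by simpa using hs.mul_const (b i)
  obtain ⟨v, hA, hneg, hzero⟩ := (isClosed_setOf_exists_sum_mul_le_and_eq A I).mem_of_tendsto
    (hb.prodMk_nhds hu) <| Eventually.of_forall fun k => by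
      refine ⟨fun j => s k * x (φ k) j, fun i => ?_, fun j hj => ?_, fun j hj => by simp [u, hj]⟩
      · simpa only [mul_left_comm _ (s k), ← Finset.mul_sum] using
          mul_le_mul_of_nonneg_left (hx (φ k) i) (hspos k).le
      · have h := mul_le_mul_of_nonneg_left (hφI k j hj) (hspos k).le
        have hone : s k * ((k : ℝ) + 1) = 1 := one_div_mul_cancel (by positivity)
        simp only [u, hj, if_true]
        linarith
  refine ⟨v, fun j hj => by simpa [hj] using hzero j hj, fun j hj => ?_, hA⟩
  have h := hneg j hj
  simp only [hj, if_true] at h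
  linarith

/-- Limits of the coordinates outside `I` along points of a polyhedron are attained, provided the
coordinates in `I` are eventually nonpositive. -/
theorem exists_eq_of_tendsto {n : ℕ} {ι : Type*} [Finite ι] (A : ι → Fin n → ℝ)
    (b : ι → ℝ) (I : Set (Fin n)) (x : ℕ → Fin n → ℝ) (hx : ∀ k i, ∑ j, A i j * x k j ≤ b i)
    (hbot : ∀ j ∈ I, ∀ᶠ k in atTop, x k j ≤ 0) (L : Fin n → ℝ)
    (hL : ∀ j ∉ I, Tendsto (fun k => x k j) atTop (𝓝 (L j))) :
    ∃ y : Fin n → ℝ, (∀ i, ∑ j, A i j * y j ≤ b i) ∧ ∀ j ∉ I, y j = L j := by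
  classical
  let u : ℕ → Fin n → ℝ := fun k j => if j ∈ I then 0 else x k j
  have hu : Tendsto u atTop (𝓝 fun j => if j ∈ I then 0 else L j) := by
    refine tendsto_pi_nhds.2 fun j => ?_
    by_cases hj : j ∈ I
    · simp [u, hj]
    · simpa [u, hj] using hL j hj
  have hI : ∀ᶠ k in atTop, ∀ j, j ∈ I → x k j ≤ 0 := eventually_all.2 fun j => by
    by_cases hj : j ∈ I
    · filter_upwards [hbot j hj] with k hk _ using hk
    · exact Eventually.of_forall fun _ h => absurd h hj
  obtain ⟨y, hA, -, hy⟩ := (isClosed_setOf_exists_sum_mul_le_and_eq A I).mem_of_tendsto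
    (tendsto_const_nhds (x := b) |>.prodMk_nhds hu) <| hI.mono fun k hk =>
      ⟨x k, hx k, fun j hj => by simpa [u, hj] using hk j hj, fun j hj => by simp [u, hj]⟩
  exact ⟨y, hA, fun j hj => by simpa [hj] using hy j hj⟩

/-- A linear map that kills a nonzero vector joining two points of a set strictly lowers the
dimension of the affine span of that set. -/
theorem finrank_direction_affineSpan_image_lt {K V W : Type*} [DivisionRing K]
    [AddCommGroup V] [Module K V] [FiniteDimensional K V] [AddCommGroup W] [Module K W]
    (f : V →ₗ[K] W) {s : Set V} {x v : V} (hx : x ∈ s) (hxv : x + v ∈ s) (hv : v ≠ 0)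
    (hfv : f v = 0) :
    Module.finrank K (affineSpan K (f '' s)).direction <
      Module.finrank K (affineSpan K s).direction := by
  have hdir : (affineSpan K (f '' s)).direction = (affineSpan K s).direction.map f := by
    simpa [AffineSubspace.map_span] using
      (affineSpan K s).map_direction f.toAffineMap
  have hmem : v ∈ (affineSpan K s).direction := by
    simpa using AffineSubspace.vsub_mem_direction
      (subset_affineSpan K s hxv) (subset_affineSpan K s hx)
  have hker : 0 < Module.finrank K (f.domRestrict (affineSpan K s).direction).ker := by
    refine Module.finrank_pos_iff_exists_ne_zero.2 ⟨⟨⟨v, hmem⟩, by simpa using hfv⟩, ?_⟩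
    simpa [Subtype.ext_iff] using hv
  have hrank := (f.domRestrict (affineSpan K s).direction).finrank_range_add_finrank_ker
  rw [LinearMap.range_domRestrict, ← hdir] at hrank
  omega

/-- For a nonempty polyhedral domain
`D = {x ∈ ℝ^N : ∀ r ∈ R, ∑ i, m r i * x i ≤ a r}` with rational slopes, a nonempty set `I`
of coordinates, and `π` the projection to the coordinates outside `I`:
(i) the existence of a sequence in `D` whose `I`-coordinates tend to `-∞` and whose other
coordinates converge is equivalent to (ii) the existence of a recession vector `v` of `D`
supported on `I` with all `I`-coordinates negative; moreover in that case the set of all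
limits of such projected sequences equals `π '' D`, whose affine span has dimension at most
`dim (affine span of D) - 1`. -/
theorem stmt_2 {ρ : Type*} (N : ℕ) (hN : 1 ≤ N) (R : Finset ρ)
    (m : ρ → Fin N → ℤ) (a : ρ → ℚ)
    (D : Set (Fin N → ℝ))
    (hD : D = {x | ∀ r ∈ R, ∑ i, (m r i : ℝ) * x i ≤ (a r : ℝ)})
    (hne : D.Nonempty)
    (I : Set (Fin N)) (hI : I.Nonempty)
    (π : (Fin N → ℝ) → ({ j : Fin N // j ∉ I } → ℝ))
    (hπ : π = fun x j => x j.val) :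
    ((∃ x : ℕ → Fin N → ℝ, (∀ k, x k ∈ D) ∧
        (∀ i ∈ I, Filter.Tendsto (fun k => x k i) Filter.atTop Filter.atBot) ∧
        (∃ L, Filter.Tendsto (fun k => π (x k)) Filter.atTop (nhds L))) ↔
      (∃ v : Fin N → ℝ, (∀ j, j ∉ I → v j = 0) ∧ (∀ i ∈ I, v i < 0) ∧
        ∀ r ∈ R, ∑ i, (m r i : ℝ) * v i ≤ 0)) ∧
    ((∃ v : Fin N → ℝ, (∀ j, j ∉ I → v j = 0) ∧ (∀ i ∈ I, v i < 0) ∧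
        ∀ r ∈ R, ∑ i, (m r i : ℝ) * v i ≤ 0) →
      ({L | ∃ x : ℕ → Fin N → ℝ, (∀ k, x k ∈ D) ∧
          (∀ i ∈ I, Filter.Tendsto (fun k => x k i) Filter.atTop Filter.atBot) ∧
          Filter.Tendsto (fun k => π (x k)) Filter.atTop (nhds L)} = π '' D ∧
        Module.finrank ℝ (affineSpan ℝ (π '' D)).direction + 1 ≤
          Module.finrank ℝ (affineSpan ℝ D).direction)) := by
  subst hD hπ
  have hx_iff (x : Fin N → ℝ) : x ∈ {x | ∀ r ∈ R, ∑ i, (m r i : ℝ) * x i ≤ (a r : ℝ)} ↔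
      ∀ r : R, ∑ i, (m r i : ℝ) * x i ≤ (a r : ℝ) := by simp
  have hcoord {x : ℕ → Fin N → ℝ} {L : {j // j ∉ I} → ℝ}
      (hL : Tendsto (fun k (j : {j // j ∉ I}) => x k j) atTop (𝓝 L)) :
      ∃ L' : Fin N → ℝ, (∀ j : {j // j ∉ I}, L' j = L j) ∧
        ∀ j ∉ I, Tendsto (fun k => x k j) atTop (𝓝 (L' j)) := by
    classical
    refine ⟨fun j => if hj : j ∉ I then L ⟨j, hj⟩ else 0, fun j => dif_pos j.2, fun j hj => ?_⟩
    simpa [hj] using tendsto_pi_nhds.1 hL ⟨j, hj⟩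
  have hray {v : Fin N → ℝ} (hv : ∀ r ∈ R, ∑ i, (m r i : ℝ) * v i ≤ 0) {x : Fin N → ℝ}
      (hx : ∀ r ∈ R, ∑ i, (m r i : ℝ) * x i ≤ (a r : ℝ)) {t : ℝ} (ht : 0 ≤ t) :
      ∀ r ∈ R, ∑ i, (m r i : ℝ) * (x + t • v) i ≤ (a r : ℝ) := fun r hr => by
    simp only [Pi.add_apply, Pi.smul_apply, smul_eq_mul, mul_add, Finset.sum_add_distrib,
      mul_left_comm _ t, ← Finset.mul_sum]
    linarith [hx r hr, mul_nonpos_of_nonneg_of_nonpos ht (hv r hr)]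
  have hseq {v : Fin N → ℝ} (hv0 : ∀ j, j ∉ I → v j = 0) (hvI : ∀ i ∈ I, v i < 0)
      (x : Fin N → ℝ) :
      (∀ i ∈ I, Tendsto (fun k : ℕ => (x + (k : ℝ) • v) i) atTop atBot) ∧
        Tendsto (fun (k : ℕ) (j : {j // j ∉ I}) => (x + (k : ℝ) • v) j) atTop
          (𝓝 fun j => x j) := by
    refine ⟨fun i hi => ?_, ?_⟩
    · exact tendsto_atBot_add_const_left _ _
        (tendsto_natCast_atTop_atTop.atTop_mul_const_of_neg (hvI i hi))
    · refine tendsto_pi_nhds.2 fun j => ?_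
      simp [hv0 j j.2]
  refine ⟨⟨?_, ?_⟩, ?_⟩
  · rintro ⟨x, hx, hbot, L, hL⟩
    obtain ⟨L', -, hL'⟩ := hcoord hL
    obtain ⟨v, hv0, hvI, hv⟩ := exists_recession_of_tendsto (fun (r : R) i => (m r i : ℝ))
      (fun r => (a r : ℝ)) I x (fun k => (hx_iff _).1 (hx k)) hbot L' hL'
    exact ⟨v, hv0, hvI, fun r hr => hv ⟨r, hr⟩⟩
  · rintro ⟨v, hv0, hvI, hv⟩
    obtain ⟨x, hx⟩ := hne
    exact ⟨fun k => x + (k : ℝ) • v, fun k => hray hv hx k.cast_nonneg, (hseq hv0 hvI x).1,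
      _, (hseq hv0 hvI x).2⟩
  · rintro ⟨v, hv0, hvI, hv⟩
    refine ⟨Set.Subset.antisymm ?_ ?_, ?_⟩
    · rintro L ⟨x, hx, hbot, hL⟩
      obtain ⟨L', hLL', hL'⟩ := hcoord hL
      obtain ⟨y, hy, hyL⟩ := exists_eq_of_tendsto (fun (r : R) i => (m r i : ℝ))
        (fun r => (a r : ℝ)) I x (fun k => (hx_iff _).1 (hx k))
        (fun i hi => (hbot i hi).eventually_le_atBot 0) L' hL'
      exact ⟨y, (hx_iff y).2 hy, funext fun j => (hyL j j.2).trans (hLL' j)⟩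
    · rintro _ ⟨x, hx, rfl⟩
      exact ⟨fun k => x + (k : ℝ) • v, fun k => hray hv hx k.cast_nonneg, hseq hv0 hvI x⟩
    · obtain ⟨x, hx⟩ := hne
      obtain ⟨i, hi⟩ := hI
      refine finrank_direction_affineSpan_image_lt
        (LinearMap.funLeft ℝ ℝ (Subtype.val : {j // j ∉ I} → Fin N)) (v := v) hx ?_
        (fun h => (hvI i hi).ne (congrFun h i)) (funext fun j => hv0 j j.2)
      simpa only [one_smul, Set.mem_ofPred_eq] using hray hv hx zero_le_one
end

section
/- Let 0 ≤ n < N be integers and let e_1, …, e_N be the standard basis of the free ℤ-module ℤ^N; set e_0 = 0. For every function h : {n+1, …, N} → {0, 1, …, n}, form the exterior product w_h = (e_{n+1} + e_{h(n+1)}) ∧ (e_{n+2} + e_{h(n+2)}) ∧ ⋯ ∧ (e_N + e_{h(N)}) in the (N−n)-th exterior power Λ^{N−n}(ℤ^N). Then the collection of all (n+1)^{N−n} elements w_h generates Λ^{N−n}(ℤ^N) as a ℤ-module. -/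
/-- A multilinear map evaluated at vectors `v i` in the spans of the finite families `g i` lies in
the span of its values at the members of these families. -/
theorem MultilinearMap.map_mem_span_range {R ι α M P : Type*} [CommSemiring R] [Finite ι]
    [Finite α] [AddCommMonoid M] [Module R M] [AddCommMonoid P] [Module R P]
    (f : MultilinearMap R (fun _ : ι => M) P) (g : ι → α → M) (v : ι → M)
    (hv : ∀ i, v i ∈ Submodule.span R (Set.range (g i))) :
    f v ∈ Submodule.span R (Set.range fun h : ι → α => f fun i => g i (h i)) := by
  classical
  cases nonempty_fintype ι
  cases nonempty_fintype α
  choose c hc using fun i => (Submodule.mem_span_range_iff_exists_fun R).1 (hv i)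
  obtain rfl : (fun i => ∑ a, c i a • g i a) = v := funext hc
  rw [f.map_sum]
  refine Submodule.sum_mem _ fun h _ => ?_
  rw [f.map_smul_univ]
  exact Submodule.smul_mem _ _ (Submodule.subset_span ⟨h, rfl⟩)

/-- An injective family of `N - n` indices below `N` can be permuted so that each index `≥ n`
stands in the position it has in the list `n, n + 1, …, N - 1`. -/
theorem exists_perm_lt_or_eq_add {N n : ℕ} (a : Fin (N - n) → Fin N)
    (ha : Function.Injective a) :
    ∃ σ : Equiv.Perm (Fin (N - n)), ∀ j, (a (σ j) : ℕ) < n ∨ (a (σ j) : ℕ) = n + j := by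
  let s : Set (Fin (N - n)) := {i | n ≤ (a i : ℕ)}
  let p : Fin (N - n) → Fin (N - n) := fun i => ⟨(a i : ℕ) - n, by have := i.2; omega⟩
  have hp : Set.InjOn p s := by
    intro i hi j hj hij
    have hi' : n ≤ (a i : ℕ) := hi
    have hj' : n ≤ (a j : ℕ) := hj
    have hij' : (a i : ℕ) - n = (a j : ℕ) - n := congrArg Fin.val hij
    exact ha (Fin.ext (by omega))
  obtain ⟨τ, hτ⟩ := Set.MapsTo.exists_equiv_extend_of_card_eq
    (t := Finset.univ) (by simp) (f := p) (s := s) (fun i _ => by simp) hp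
  let ρ : Equiv.Perm (Fin (N - n)) := τ.trans (Equiv.subtypeUnivEquiv Finset.mem_univ)
  refine ⟨ρ.symm, fun j => ?_⟩
  by_cases hj : (a (ρ.symm j) : ℕ) < n
  · exact Or.inl hj
  · have hj' : n ≤ (a (ρ.symm j) : ℕ) := not_lt.1 hj
    have h : ρ (ρ.symm j) = p (ρ.symm j) := hτ _ hj'
    rw [Equiv.apply_symm_apply] at h
    have h' : (j : ℕ) = (a (ρ.symm j) : ℕ) - n := congrArg Fin.val h
    exact Or.inr (by omega)

/-- For `0 ≤ n < N`, the `(n+1)^(N-n)` polyvectors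
`w_h = (e_{n+1} + e_{h(n+1)}) ∧ ⋯ ∧ (e_N + e_{h(N)})` (where `e_0 = 0` and
`h : {n+1,…,N} → {0,…,n}`) generate the exterior power `Λ^{N-n}(ℤ^N)` as a `ℤ`-module. -/
theorem stmt_3 (N n : ℕ) (hn : n < N)
    (E : ℕ → Fin N → ℤ)
    (hE : E = fun (i : ℕ) (j : Fin N) => if (j : ℕ) + 1 = i then (1 : ℤ) else 0)
    (w : (Fin (N - n) → Fin (n + 1)) → ExteriorAlgebra ℤ (Fin N → ℤ))
    (hw : w = fun h => ExteriorAlgebra.ιMulti ℤ (N - n)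
        (fun j => E (n + 1 + (j : ℕ)) + E ((h j : ℕ)))) :
    Submodule.span ℤ (Set.range w) = ⋀[ℤ]^(N - n) (Fin N → ℤ) := by
  have hE_zero : E 0 = 0 := by
    ext j
    simp [hE]
  have hE_basis (k : Fin N) : Pi.basisFun ℤ (Fin N) k = E (k + 1) := by
    ext j
    simp [hE, Pi.single_apply, Fin.ext_iff]
  apply le_antisymm
  · rw [Submodule.span_le, ← exteriorPower.ιMulti_span_fixedDegree, hw]
    rintro _ ⟨h, rfl⟩
    exact Submodule.subset_span ⟨_, rfl⟩
  rw [← exteriorPower.ιMulti_span_fixedDegree_of_span_eq_top ℤ (N - n) (Fin N → ℤ)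
    (Pi.basisFun ℤ (Fin N)).span_eq, Submodule.span_le]
  rintro _ ⟨v, hv, rfl⟩
  choose a ha using fun i => hv (Set.mem_range_self i)
  obtain rfl : (fun i => Pi.basisFun ℤ (Fin N) (a i)) = v := funext ha
  by_cases hinj : Function.Injective a
  · obtain ⟨σ, hσ⟩ := exists_perm_lt_or_eq_add a hinj
    have key := (ExteriorAlgebra.ιMulti ℤ (N - n)).toMultilinearMap.map_mem_span_range
      (fun (j : Fin (N - n)) (k : Fin (n + 1)) => E (n + 1 + (j : ℕ)) + E (k : ℕ))
      ((fun i => Pi.basisFun ℤ (Fin N) (a i)) ∘ σ) (by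
        intro j
        have h_first : E (n + 1 + (j : ℕ)) ∈ Submodule.span ℤ (Set.range
            fun k : Fin (n + 1) => E (n + 1 + (j : ℕ)) + E (k : ℕ)) :=
          Submodule.subset_span ⟨0, by simp [hE_zero]⟩
        simp only [Function.comp_apply, hE_basis]
        rcases hσ j with h | h
        · rw [← add_sub_cancel_left (E (n + 1 + (j : ℕ))) (E ((a (σ j) : ℕ) + 1))]
          exact Submodule.sub_mem _
            (Submodule.subset_span ⟨⟨(a (σ j) : ℕ) + 1, by omega⟩, rfl⟩) h_first
        · rwa [h, add_right_comm n (j : ℕ) 1])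
    rw [AlternatingMap.coe_multilinearMap, AlternatingMap.map_perm] at key
    subst hw
    have key' := Submodule.smul_mem _ ((Equiv.Perm.sign σ : ℤˣ) : ℤ) key
    rw [← Units.smul_def, smul_smul, Int.units_mul_self, one_smul] at key'
    exact key'
  · have hzero : ExteriorAlgebra.ιMulti ℤ (N - n)
        (fun i => Pi.basisFun ℤ (Fin N) (a i)) = 0 :=
      AlternatingMap.map_eq_zero_of_not_injective _ _ fun h =>
        hinj (Function.Injective.of_comp (f := Pi.basisFun ℤ (Fin N)) h)
    rw [hzero]
    exact Submodule.zero_mem _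
end

section
/- Let 0 ≤ n ≤ N be integers, let e_1, …, e_N be the standard basis of ℤ^N, and set vol = e_1 ∧ ⋯ ∧ e_N ∈ Λ^N(ℤ^N) and ω = e_1 ∧ ⋯ ∧ e_n ∈ Λ^n(ℤ^N). Suppose K ∈ Λ^n(ℤ^N) has the following property: for every w ∈ Λ^{N−n}(ℤ^N) satisfying ω ∧ w = vol, the element K ∧ w ∈ Λ^N(ℤ^N), written as λ_w · vol, has λ_w ≥ 0. Then K = c · ω for some nonnegative integer c. -/
open Set.powersetCard in
/-- Complementary basis elements of the exterior algebra multiply to the top one, up to sign. -/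
theorem ExteriorAlgebra.exists_basis_mul_basis_compl {R M I : Type*} [LinearOrder I] [Fintype I]
    [CommRing R] [AddCommGroup M] [Module R M] (b : Module.Basis I R M) (s : Finset I) :
    ∃ ε : ℤˣ, b.ExteriorAlgebra s * b.ExteriorAlgebra sᶜ = ε • b.ExteriorAlgebra Finset.univ := by
  have h : Disjoint (ofCard (rfl : s.card = _)).val (ofCard (rfl : sᶜ.card = _)).val :=
    disjoint_compl_right
  refine ⟨(permOfDisjoint h).sign, ?_⟩
  have := ExteriorAlgebra.basis_mul_of_disjoint b _ _ h
  rwa [coe_disjUnion, Finset.disjUnion_eq_union, val_ofCard, val_ofCard, Finset.union_compl] at this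

/-- Basis elements of the exterior algebra indexed by intersecting sets multiply to zero. -/
theorem ExteriorAlgebra.basis_mul_basis_eq_zero {R M I : Type*} [LinearOrder I]
    [CommRing R] [AddCommGroup M] [Module R M] (b : Module.Basis I R M) {s t : Finset I}
    (h : ¬Disjoint s t) : b.ExteriorAlgebra s * b.ExteriorAlgebra t = 0 :=
  ExteriorAlgebra.basis_mul_of_not_disjoint b (Set.powersetCard.ofCard rfl)
    (Set.powersetCard.ofCard rfl) h

/-- If `s ≠ t` have the same cardinality, the basis elements of the exterior algebra indexed by
`s` and by the complement of `t` multiply to zero. -/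
theorem ExteriorAlgebra.basis_mul_basis_compl_of_ne {R M I : Type*} [LinearOrder I] [Fintype I]
    [CommRing R] [AddCommGroup M] [Module R M] (b : Module.Basis I R M) {n : ℕ}
    {s t : Set.powersetCard I n} (h : s ≠ t) :
    b.ExteriorAlgebra s * b.ExteriorAlgebra (t : Finset I)ᶜ = 0 :=
  basis_mul_basis_eq_zero b fun hd ↦
    h (Set.powersetCard.eq_iff_subset.mpr (disjoint_compl_right_iff.mp hd))

/-- Basis elements of the exterior algebra are homogeneous. -/
theorem ExteriorAlgebra.basis_mem_exteriorPower {R M I : Type*} [LinearOrder I]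
    [CommRing R] [AddCommGroup M] [Module R M] (b : Module.Basis I R M) {n : ℕ} {s : Finset I}
    (hs : s.card = n) : b.ExteriorAlgebra s ∈ ⋀[R]^n M := by
  rw [basis_apply_ofCard b hs]
  exact ιMulti_range R n ⟨_, rfl⟩

/-- Let `vol = e_1 ∧ ⋯ ∧ e_N ∈ Λ^N(ℤ^N)` and `ω = e_1 ∧ ⋯ ∧ e_n ∈ Λ^n(ℤ^N)`.
If `K ∈ Λ^n(ℤ^N)` is such that for every `w ∈ Λ^{N-n}(ℤ^N)` with `ω ∧ w = vol` the integer
`λ_w` with `K ∧ w = λ_w • vol` is nonnegative, then `K = c • ω` for some `c ∈ ℕ`. -/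
theorem stmt_4 (N n : ℕ) (hn : n ≤ N)
    (e : Fin N → Fin N → ℤ) (he : e = fun i => Pi.single i 1)
    (vol ω : ExteriorAlgebra ℤ (Fin N → ℤ))
    (hvol : vol = ExteriorAlgebra.ιMulti ℤ N e)
    (hω : ω = ExteriorAlgebra.ιMulti ℤ n (fun i => e (Fin.castLE hn i)))
    (K : ExteriorAlgebra ℤ (Fin N → ℤ)) (hK : K ∈ ⋀[ℤ]^n (Fin N → ℤ))
    (hpos : ∀ w : ExteriorAlgebra ℤ (Fin N → ℤ), w ∈ ⋀[ℤ]^(N - n) (Fin N → ℤ) →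
      ω * w = vol → ∀ lam : ℤ, K * w = lam • vol → 0 ≤ lam) :
    ∃ c : ℕ, K = (c : ℤ) • ω := by
  set b := Pi.basisFun ℤ (Fin N)
  have hb : e = b := by ext1 i; simp [he, b]
  set B := b.ExteriorAlgebra
  let s₀ : Set.powersetCard (Fin N) n := Set.powersetCard.ofFinEmbEquiv (Fin.castLEOrderEmb hn)
  have hωB : ω = B s₀ := by
    rw [ExteriorAlgebra.basis_apply_powersetCard, hω, hb, ExteriorAlgebra.ιMulti_family,
      Equiv.symm_apply_apply]
    rfl
  have hvolB : vol = B Finset.univ := by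
    let u : Set.powersetCard (Fin N) N :=
      Set.powersetCard.ofFinEmbEquiv (RelEmbedding.refl (· ≤ ·))
    have hu : (u : Finset (Fin N)) = Finset.univ :=
      (Finset.card_eq_iff_eq_univ _).mp (by simp)
    rw [← hu, ExteriorAlgebra.basis_apply_powersetCard, hvol, hb, ExteriorAlgebra.ιMulti_family,
      Equiv.symm_apply_apply]
    rfl
  choose ε hε using ExteriorAlgebra.exists_basis_mul_basis_compl b
  obtain ⟨a, ha⟩ : ∃ a : Set.powersetCard (Fin N) n → ℤ, K = ∑ s, a s • B s := by
    refine ⟨(b.exteriorPower n).repr ⟨K, hK⟩, ?_⟩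
    have := congrArg Subtype.val ((b.exteriorPower n).sum_repr ⟨K, hK⟩)
    simpa [B, ExteriorAlgebra.basis_eq_coe_basis] using this.symm
  have hKmul (t : Set.powersetCard (Fin N) n) :
      K * B (t : Finset (Fin N))ᶜ = (a t * (ε t : ℤ)) • vol := by
    rw [ha, Finset.sum_mul, Finset.sum_eq_single t, smul_mul_assoc, hε, hvolB, mul_smul,
      Units.smul_def]
    · intro s _ hs
      rw [smul_mul_assoc, ExteriorAlgebra.basis_mul_basis_compl_of_ne b hs, smul_zero]
    · simp
  have hmem (t : Set.powersetCard (Fin N) n) :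
      B (t : Finset (Fin N))ᶜ ∈ ⋀[ℤ]^(N - n) (Fin N → ℤ) :=
    ExteriorAlgebra.basis_mem_exteriorPower b (by simp [Finset.card_compl])
  have hsq (s : Finset (Fin N)) : (ε s : ℤ) * (ε s : ℤ) = 1 := by
    rw [← Units.val_mul, Int.units_mul_self, Units.val_one]
  have hω₀ : ω * ((ε s₀ : ℤ) • B (s₀ : Finset (Fin N))ᶜ) = vol := by
    rw [mul_smul_comm, hωB, hε, Units.smul_def, smul_smul, hsq, one_smul, hvolB]
  have hK₀ : K * ((ε s₀ : ℤ) • B (s₀ : Finset (Fin N))ᶜ) = a s₀ • vol := by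
    rw [mul_smul_comm, hKmul, smul_smul, mul_left_comm, hsq, mul_one]
  have hmem₀ := Submodule.smul_mem _ (ε s₀ : ℤ) (hmem s₀)
  have ha₀ : 0 ≤ a s₀ := hpos _ hmem₀ hω₀ _ hK₀
  have hzero (t) (ht : t ≠ s₀) : a t = 0 := by
    -- Adding a multiple of `B tᶜ` to `w` keeps it transversal and shifts the pairing with `K`.
    have key (k : ℤ) : 0 ≤ a s₀ + k * a t := by
      refine hpos _ (Submodule.add_mem _ hmem₀ (Submodule.smul_mem _ (k * ε t) (hmem t))) ?_ _ ?_
      · rw [mul_add, hω₀, mul_smul_comm, hωB,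
          ExteriorAlgebra.basis_mul_basis_compl_of_ne b ht.symm, smul_zero, add_zero]
      · rw [mul_add, hK₀, mul_smul_comm, hKmul, smul_smul, ← add_smul]
        congr 2
        linear_combination k * a t * hsq t
    have := key (-(a s₀ + 1) * a t)
    by_contra hne
    nlinarith [Int.one_le_abs hne, sq_abs (a t), mul_self_pos.mpr hne]
  refine ⟨(a s₀).toNat, ?_⟩
  rw [Int.toNat_of_nonneg ha₀, ha, hωB, Finset.sum_eq_single s₀]
  · intro t _ ht
    rw [hzero t ht, zero_smul]
  · simp
end

section
/- Let A be a finite set of vectors in ℤ^N with at least two elements, let c : A → ℝ, and define F : ℝ^N → ℝ by F(x) = max_{m ∈ A}(⟨m, x⟩ + c(m)). Let V = {y ∈ ℝ^N : the maximum defining F(y) is attained by at least two distinct elements of A}. Suppose x ∈ ℝ^N is a point at which the maximum is attained by a unique element m₀ ∈ A. Then V is nonempty and there exists y ∈ V with ‖y − x‖ ≤ F(x) − max_{m ∈ A, m ≠ m₀}(⟨m, x⟩ + c(m)), where ‖·‖ is the Euclidean norm on ℝ^N. -/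
/-- Distinct integer vectors are at Euclidean distance at least `1`. -/
lemma one_le_norm_toLp_intCast_sub {ι : Type*} [Fintype ι] {m n : ι → ℤ} (h : m ≠ n) :
    1 ≤ ‖WithLp.toLp 2 (fun i => (m i : ℝ) - n i)‖ := by
  obtain ⟨i, hi⟩ := Function.ne_iff.mp h
  have hcoord : (1 : ℝ) ≤ |(m i : ℝ) - n i| := by
    exact_mod_cast Int.one_le_abs (sub_ne_zero.mpr hi)
  exact hcoord.trans (PiLp.norm_apply_le (WithLp.toLp 2 (fun i => (m i : ℝ) - n i)) i)

/-- If the affine function with slope `m₁` lies `δ` below the one with slope `m₀ ≠ m₁` at `x`,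
then the two agree at some point `x + d` with `‖d‖ ≤ δ`. -/
lemma exists_norm_le_affine_eq {ι : Type*} [Fintype ι] {m₀ m₁ : ι → ℤ} (h : m₁ ≠ m₀)
    {δ a₀ a₁ : ℝ} (hδ : 0 ≤ δ) (x : EuclideanSpace ℝ ι)
    (hx : ∑ i, (m₀ i : ℝ) * x i + a₀ - (∑ i, (m₁ i : ℝ) * x i + a₁) = δ) :
    ∃ d : EuclideanSpace ℝ ι, ‖d‖ ≤ δ ∧
      ∑ i, (m₀ i : ℝ) * (x + d) i + a₀ = ∑ i, (m₁ i : ℝ) * (x + d) i + a₁ := by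
  set v : EuclideanSpace ℝ ι := WithLp.toLp 2 (fun i => (m₁ i : ℝ) - m₀ i)
  have hv1 : 1 ≤ ‖v‖ := one_le_norm_toLp_intCast_sub h
  have hsq : ∑ i, ((m₁ i : ℝ) - m₀ i) * v i = ‖v‖ ^ 2 := by
    rw [EuclideanSpace.real_norm_sq_eq]
    exact Finset.sum_congr rfl fun i _ => (sq _).symm
  refine ⟨(δ / ‖v‖ ^ 2) • v, ?_, ?_⟩
  · rw [norm_smul, Real.norm_of_nonneg (by positivity), div_mul_eq_mul_div,
      div_le_iff₀ (by positivity)]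
    nlinarith [mul_nonneg hδ (mul_nonneg (norm_nonneg v) (sub_nonneg.mpr hv1))]
  · have hstep : δ / ‖v‖ ^ 2 * ∑ i, ((m₁ i : ℝ) - m₀ i) * v i = δ := by
      rw [hsq]
      field_simp
    simp only [sub_mul, Finset.sum_sub_distrib, mul_sub, Finset.mul_sum] at hstep
    simp only [PiLp.add_apply, PiLp.smul_apply, smul_eq_mul, mul_add, Finset.sum_add_distrib,
      mul_left_comm _ (δ / ‖v‖ ^ 2)]
    linarith

/-- Let `F x = max_{m ∈ A}(⟨m,x⟩ + c m)` be a tropical polynomial with at least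
two terms and let `V` be its corner locus. If the maximum at `x` is attained by the unique
element `m₀ ∈ A`, then `V` is nonempty and contains a point `y` with
`‖y - x‖ ≤ F x - max_{m ∈ A, m ≠ m₀}(⟨m,x⟩ + c m)` (Euclidean norm). -/
theorem stmt_7 (N : ℕ) (A : Finset (Fin N → ℤ)) (hA : 2 ≤ A.card)
    (c : (Fin N → ℤ) → ℝ)
    (F : EuclideanSpace ℝ (Fin N) → ℝ)
    (hF : F = fun x => A.sup' (Finset.card_pos.mp (by omega))
      (fun m => ∑ i, (m i : ℝ) * x i + c m))
    (V : Set (EuclideanSpace ℝ (Fin N)))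
    (hV : V = {y | ∃ m₁ ∈ A, ∃ m₂ ∈ A, m₁ ≠ m₂ ∧
        ∑ i, (m₁ i : ℝ) * y i + c m₁ = F y ∧ ∑ i, (m₂ i : ℝ) * y i + c m₂ = F y})
    (x : EuclideanSpace ℝ (Fin N)) (m₀ : Fin N → ℤ) (hm₀ : m₀ ∈ A)
    (hmax : ∑ i, (m₀ i : ℝ) * x i + c m₀ = F x)
    (huniq : ∀ m ∈ A, ∑ i, (m i : ℝ) * x i + c m = F x → m = m₀) :
    V.Nonempty ∧ ∃ y ∈ V, ‖y - x‖ ≤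
      F x - (A.erase m₀).sup'
        (by rw [← Finset.card_pos, Finset.card_erase_of_mem hm₀]; omega)
        (fun m => ∑ i, (m i : ℝ) * x i + c m) := by
  suffices h : ∃ y ∈ V, ‖y - x‖ ≤ F x - (A.erase m₀).sup'
      (by rw [← Finset.card_pos, Finset.card_erase_of_mem hm₀]; omega)
      (fun m => ∑ i, (m i : ℝ) * x i + c m) from
    ⟨h.imp fun _ hy => hy.1, h⟩
  have hne : (A.erase m₀).Nonempty := by
    rw [← Finset.card_pos, Finset.card_erase_of_mem hm₀]; omega
  let l : (Fin N → ℤ) → EuclideanSpace ℝ (Fin N) → ℝ := fun m y => ∑ i, (m i : ℝ) * y i + c m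
  let G : EuclideanSpace ℝ (Fin N) → ℝ := fun y => (A.erase m₀).sup' hne (fun m => l m y)
  change ∃ y ∈ V, ‖y - x‖ ≤ F x - G x
  have hle : ∀ y, ∀ m ∈ A, l m y ≤ F y := fun y m hm => by
    rw [hF]
    exact Finset.le_sup' (fun m => l m y) hm
  have hl : ∀ m, Continuous (l m) := fun m => by fun_prop
  have hG : Continuous G := Continuous.finset_sup'_apply hne fun m _ => hl m
  obtain ⟨m₁, hm₁, hGx⟩ := Finset.exists_mem_eq_sup' hne (fun m => l m x)
  obtain ⟨hm₁ne, hm₁A⟩ := Finset.mem_erase.mp hm₁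
  have hGx' : G x = l m₁ x := hGx
  have hδ : 0 ≤ F x - G x := by
    rw [hGx']
    exact sub_nonneg.mpr (hle x m₁ hm₁A)
  obtain ⟨d, hd, hmeet⟩ := exists_norm_le_affine_eq hm₁ne (a₀ := c m₀) (a₁ := c m₁) hδ x
    (by rw [hmax, hGx'])
  have hcross : (0 : ℝ) ∈ Set.Icc (G (x + (0 : ℝ) • d) - l m₀ (x + (0 : ℝ) • d))
      (G (x + (1 : ℝ) • d) - l m₀ (x + (1 : ℝ) • d)) := by
    rw [zero_smul, add_zero, one_smul]
    constructor
    · have : l m₀ x = F x := hmax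
      linarith
    · have h₁ : l m₁ (x + d) ≤ G (x + d) := Finset.le_sup' (fun m => l m (x + d)) hm₁
      have h₀ : l m₀ (x + d) = l m₁ (x + d) := hmeet
      linarith
  have hcont : Continuous fun t : ℝ => G (x + t • d) - l m₀ (x + t • d) :=
    (hG.comp (by fun_prop)).sub ((hl m₀).comp (by fun_prop))
  obtain ⟨t, ⟨ht0, ht1⟩, ht⟩ := intermediate_value_Icc zero_le_one hcont.continuousOn hcross
  have hGt : G (x + t • d) = l m₀ (x + t • d) := sub_eq_zero.mp ht
  obtain ⟨m₂, hm₂, hm₂G⟩ := Finset.exists_mem_eq_sup' hne (fun m => l m (x + t • d))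
  obtain ⟨hm₂ne, hm₂A⟩ := Finset.mem_erase.mp hm₂
  have hm₂l : l m₂ (x + t • d) = l m₀ (x + t • d) := hm₂G.symm.trans hGt
  have hFt : l m₀ (x + t • d) = F (x + t • d) := by
    refine le_antisymm (hle _ _ hm₀) ?_
    rw [hF]
    refine Finset.sup'_le _ _ fun m hm => ?_
    by_cases hmm : m = m₀
    · rw [hmm]
    · exact (Finset.le_sup' (fun m => l m (x + t • d)) (Finset.mem_erase.mpr ⟨hmm, hm⟩)).trans
        hGt.le
  refine ⟨x + t • d, ?_, ?_⟩
  · rw [hV]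
    exact ⟨m₀, hm₀, m₂, hm₂A, hm₂ne.symm, hFt, hm₂l.trans hFt⟩
  · rw [add_sub_cancel_left, norm_smul, Real.norm_of_nonneg ht0]
    exact (mul_le_of_le_one_left (norm_nonneg d) ht1).trans hd
end

section
/- Let A be a nonempty finite set of vectors in ℝ^N, let c : A → ℝ, and define F : ℝ^N → ℝ by F(x) = max_{m ∈ A}(⟨m, x⟩ + c(m)). Then for every x ∈ ℝ^N, the function F is differentiable at x if and only if there is exactly one m ∈ A with ⟨m, x⟩ + c(m) = F(x). -/
open Filter in
/-- If `f ≤ F` with equality at `x`, then the derivatives of `f` and `F` at `x` agree. -/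
theorem HasFDerivAt.eq_of_le_of_eq {E : Type*} [NormedAddCommGroup E] [NormedSpace ℝ E]
    {f F : E → ℝ} {f' F' : E →L[ℝ] ℝ} {x : E} (hf : HasFDerivAt f f' x)
    (hF : HasFDerivAt F F' x) (hle : ∀ y, f y ≤ F y) (heq : f x = F x) : f' = F' := by
  have hmin : IsLocalMin (F - f) x := Eventually.of_forall fun y => by
    simpa [heq] using hle y
  exact (sub_eq_zero.1 (hmin.hasFDerivAt_eq_zero (hF.sub hf))).symm

open Filter Topology in
/-- Near a point where a finite maximum of continuous functions is attained by only one of them,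
the maximum coincides with that function. -/
theorem Finset.sup'_eventuallyEq_of_forall_lt {ι X : Type*} [TopologicalSpace X]
    {s : Finset ι} (hs : s.Nonempty) {f : ι → X → ℝ} {x : X} {i : ι} (hi : i ∈ s)
    (hf : ∀ j ∈ s, ContinuousAt (f j) x) (hlt : ∀ j ∈ s, j ≠ i → f j x < f i x) :
    (fun y => s.sup' hs fun j => f j y) =ᶠ[𝓝 x] f i := by
  have hev : ∀ᶠ y in 𝓝 x, ∀ j ∈ s, f j y ≤ f i y := by
    rw [eventually_all_finset]
    intro j hj
    by_cases hji : j = i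
    · exact Eventually.of_forall fun y => hji ▸ le_rfl
    · exact ((hf j hj).eventually_lt (hf i hi) (hlt j hj hji)).mono fun y hy => hy.le
  filter_upwards [hev] with y hy
  exact le_antisymm (Finset.sup'_le hs _ hy) (Finset.le_sup' (fun j => f j y) hi)

theorem hasFDerivAt_sum_mul_add_const {ι : Type*} [Fintype ι] (m x : ι → ℝ) (b : ℝ) :
    HasFDerivAt (fun y : ι → ℝ => ∑ i, m i * y i + b)
      (∑ i, m i • ContinuousLinearMap.proj (R := ℝ) (φ := fun _ : ι => ℝ) i) x :=
  (HasFDerivAt.fun_sum fun i _ => (hasFDerivAt_apply i x).const_mul (m i)).add_const b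

theorem sum_smul_proj_injective {ι : Type*} [Fintype ι] :
    Function.Injective fun m : ι → ℝ =>
      ∑ i, m i • ContinuousLinearMap.proj (R := ℝ) (φ := fun _ : ι => ℝ) i := by
  classical
  intro m n h
  ext j
  simpa [sum_apply, Pi.single_apply] using
    DFunLike.congr_fun h (Pi.single j (1 : ℝ))

/-- The convex piecewise-linear function `F x = max_{m ∈ A}(⟨m,x⟩ + c m)`
given by a tropical polynomial is differentiable at `x` if and only if the maximum is
attained by exactly one `m ∈ A`. -/
theorem stmt_9 (N : ℕ) (A : Finset (Fin N → ℝ)) (hA : A.Nonempty)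
    (c : (Fin N → ℝ) → ℝ)
    (F : (Fin N → ℝ) → ℝ)
    (hF : F = fun x => A.sup' hA (fun m => ∑ i, m i * x i + c m)) :
    ∀ x, DifferentiableAt ℝ F x ↔ ∃! m, m ∈ A ∧ ∑ i, m i * x i + c m = F x := by
  intro x
  have hle : ∀ m ∈ A, ∀ y, ∑ i, m i * y i + c m ≤ F y := fun m hm y => by
    rw [hF]
    exact Finset.le_sup' (fun m => ∑ i, m i * y i + c m) hm
  constructor
  · intro hd
    obtain ⟨m, hm, hmx⟩ := Finset.exists_mem_eq_sup' hA (fun m => ∑ i, m i * x i + c m)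
    have hmx' : ∑ i, m i * x i + c m = F x := hmx.symm.trans (congrFun hF x).symm
    refine ⟨m, ⟨hm, hmx'⟩, fun n ⟨hn, hnx⟩ => sum_smul_proj_injective ?_⟩
    exact ((hasFDerivAt_sum_mul_add_const n x (c n)).eq_of_le_of_eq hd.hasFDerivAt
      (hle n hn) hnx).trans ((hasFDerivAt_sum_mul_add_const m x (c m)).eq_of_le_of_eq
      hd.hasFDerivAt (hle m hm) hmx').symm
  · rintro ⟨m, ⟨hm, hmx⟩, huniq⟩
    have hev := Finset.sup'_eventuallyEq_of_forall_lt hA (x := x)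
      (f := fun m y => ∑ i, m i * y i + c m) hm
      (fun n _ => (hasFDerivAt_sum_mul_add_const n x (c n)).continuousAt)
      (fun n hn hne => hmx ▸ lt_of_le_of_ne (hle n hn x) fun h => hne (huniq n ⟨hn, h⟩))
    rw [← hF] at hev
    exact ((hasFDerivAt_sum_mul_add_const m x (c m)).congr_of_eventuallyEq hev).differentiableAt
end
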